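/- arXiv:2402.08331 — 2 statements merged into one kernel-verified Lean document; each statement's English description precedes it below -/
import Mathlib

section
/- Let k ≥ 1 and let α_1, …, α_k, β_1, …, β_k be real numbers with 0 < α_i < 1 and 0 < β_i < 1 for each i. For each i define the Sturmian word s_i : ℕ → ℤ by s_i(n) = ⌊(n+1)α_i + β_i⌋ − ⌊n α_i + β_i⌋, and define the word s : ℕ → ℤ^k by s(n) = (s_1(n), …, s_k(n)). If the k+1 real numbers 1, α_1, …, α_k are linearly independent over ℚ, then for every n ≥ 0 the number of distinct length-n factors of s, i.e., the cardinality of the set { (s(q), s(q+1), …, s(q+n−1)) : q ≥ 0 }, equals (n+1)^k. -/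
/-!
The factor at position `q` of the product word is determined by the orbit point `(q αᵢ + βᵢ)ᵢ` of a
rotation of the torus. In one coordinate, the length-`n` factors seen from `x` and `y` agree exactly
when as many of the breakpoints `1 - fract ((j + 1) αᵢ)`, `j < n`, are at most `fract x` as are at
most `fract y`. Since `αᵢ` is irrational, the breakpoints are `n` distinct points of `(0, 1)`, which
cut out `n + 1` intervals. By Kronecker's theorem the orbit visits every box formed by such
intervals, so exactly `(n + 1) ^ k` factors occur.

Kronecker's theorem is obtained from unique ergodicity: a nontrivial character integrates to zero
against any measure preserved by the rotation, hence the Haar probability measure of the closure of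
the subgroup generated by the rotation is that of the whole torus.
-/

open MeasureTheory UnitAddTorus
open scoped Finset

section Kronecker

variable {ι : Type*} [Fintype ι]

theorem mFourier_apply_add (m : ι → ℤ) (x y : UnitAddTorus ι) :
    mFourier m (x + y) = mFourier m x * mFourier m y := by
  simp only [mFourier, ContinuousMap.coe_mk, Pi.add_apply, fourier_apply, smul_add,
    AddCircle.toCircle_add, Circle.coe_mul, Finset.prod_mul_distrib]

theorem mFourier_apply_coe (m : ι → ℤ) (x : ι → ℝ) :
    mFourier m (fun i ↦ (x i : UnitAddCircle)) =
      Complex.exp (2 * Real.pi * Complex.I * (∑ i, m i * x i : ℝ)) := by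
  simp only [mFourier, ContinuousMap.coe_mk, fourier_coe_apply, ← Complex.exp_sum]
  push_cast
  rw [Finset.mul_sum]
  congr! 2 with i
  ring

theorem unitAddCircle_coe_eq_coe_iff {x y : ℝ} :
    (x : UnitAddCircle) = y ↔ Int.fract x = Int.fract y := by
  rw [← sub_eq_zero, ← AddCircle.coe_sub, AddCircle.coe_eq_zero_iff, Int.fract_eq_fract]
  simp only [zsmul_eq_mul, mul_one, eq_comm]

theorem integral_mFourier_eq_zero {m : ι → ℤ} {a : UnitAddTorus ι} (ha : mFourier m a ≠ 1)
    {μ : Measure (UnitAddTorus ι)} (hμ : MeasurePreserving (· + a) μ μ) :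
    ∫ x, mFourier m x ∂μ = 0 := by
  have h_invariant : (∫ x, mFourier m x ∂μ) * mFourier m a = ∫ x, mFourier m x ∂μ := by
    rw [← integral_mul_const]
    simp only [← mFourier_apply_add]
    exact hμ.integral_comp (measurableEmbedding_addRight a) _
  exact (mul_right_eq_self₀.1 h_invariant).resolve_left ha

/-- Integration against a finite measure on a compact space, as a continuous linear functional. -/
noncomputable def continuousMapIntegralCLM {X : Type*} [TopologicalSpace X] [CompactSpace X]
    [MeasurableSpace X] [BorelSpace X] (μ : Measure X) [IsFiniteMeasure μ] : C(X, ℂ) →L[ℂ] ℂ :=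
  (L1.integralCLM' ℂ).comp (ContinuousMap.toLp 1 μ ℂ)

theorem continuousMapIntegralCLM_apply {X : Type*} [TopologicalSpace X] [CompactSpace X]
    [MeasurableSpace X] [BorelSpace X] (μ : Measure X) [IsFiniteMeasure μ] (f : C(X, ℂ)) :
    continuousMapIntegralCLM μ f = ∫ x, f x ∂μ := by
  rw [continuousMapIntegralCLM, ContinuousLinearMap.comp_apply, ← L1.integral_eq',
    L1.integral_eq_integral]
  exact integral_congr_ae (ContinuousMap.coeFn_toLp μ f)

theorem ext_of_integral_mFourier_eq {μ ν : Measure (UnitAddTorus ι)}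
    [IsFiniteMeasure μ] [IsFiniteMeasure ν]
    (h : ∀ m : ι → ℤ, ∫ x, mFourier m x ∂μ = ∫ x, mFourier m x ∂ν) : μ = ν := by
  have h_functional : continuousMapIntegralCLM μ = continuousMapIntegralCLM ν := by
    refine ContinuousLinearMap.ext_on
      (Submodule.dense_iff_topologicalClosure_eq_top.2 span_mFourier_closure_eq_top) ?_
    rintro _ ⟨m, rfl⟩
    simpa only [continuousMapIntegralCLM_apply] using h m
  refine ext_of_forall_integral_eq_of_IsFiniteMeasure fun f ↦ ?_
  have hf := congr($h_functional ⟨fun x ↦ (f x : ℂ), by fun_prop⟩)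
  simpa only [continuousMapIntegralCLM_apply, ContinuousMap.coe_mk, integral_complex_ofReal,
    Complex.ofReal_inj] using hf

theorem eq_of_measurePreserving_add_right {a : UnitAddTorus ι}
    (ha : ∀ m : ι → ℤ, m ≠ 0 → mFourier m a ≠ 1) {μ ν : Measure (UnitAddTorus ι)}
    [IsProbabilityMeasure μ] [IsProbabilityMeasure ν]
    (hμ : MeasurePreserving (· + a) μ μ) (hν : MeasurePreserving (· + a) ν ν) : μ = ν := by
  refine ext_of_integral_mFourier_eq fun m ↦ ?_
  obtain rfl | hm := eq_or_ne m 0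
  · simp [mFourier_zero]
  · rw [integral_mFourier_eq_zero (ha m hm) hμ, integral_mFourier_eq_zero (ha m hm) hν]

theorem addSubgroup_eq_top_of_isClosed_of_mem {a : UnitAddTorus ι}
    (ha : ∀ m : ι → ℤ, m ≠ 0 → mFourier m a ≠ 1) {H : AddSubgroup (UnitAddTorus ι)}
    (hH : IsClosed (H : Set (UnitAddTorus ι))) (haH : a ∈ H) : H = ⊤ := by
  have : CompactSpace H := isCompact_iff_compactSpace.1 hH.isCompact
  let μ : Measure H := Measure.addHaarMeasure ⊤
  let ν : Measure (UnitAddTorus ι) := Measure.addHaarMeasure ⊤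
  have : IsProbabilityMeasure μ := ⟨Measure.addHaarMeasure_self⟩
  have : IsProbabilityMeasure ν := ⟨Measure.addHaarMeasure_self⟩
  have : IsProbabilityMeasure (μ.map Subtype.val) :=
    Measure.isProbabilityMeasure_map measurable_subtype_coe.aemeasurable
  have hμ : MeasurePreserving (· + a) (μ.map Subtype.val) (μ.map Subtype.val) := by
    have h_semiconj : (· + a) ∘ Subtype.val = Subtype.val ∘ (· + (⟨a, haH⟩ : H)) := rfl
    refine ⟨measurable_add_const a, ?_⟩
    rw [Measure.map_map (measurable_add_const a) measurable_subtype_coe, h_semiconj,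
      ← Measure.map_map measurable_subtype_coe (measurable_add_const _), map_add_right_eq_self]
  have h_eq : μ.map Subtype.val = ν :=
    eq_of_measurePreserving_add_right ha hμ (measurePreserving_add_right ν a)
  have h_null : ν (H : Set (UnitAddTorus ι))ᶜ = 0 := by
    have h_disjoint : (↑) ⁻¹' (H : Set (UnitAddTorus ι))ᶜ = (∅ : Set H) :=
      Set.eq_empty_of_forall_notMem fun x hx ↦ hx x.2
    rw [← h_eq, Measure.map_apply measurable_subtype_coe hH.measurableSet.compl, h_disjoint,
      measure_empty]
  rwa [hH.isOpen_compl.measure_eq_zero_iff ν, Set.compl_empty_iff, AddSubgroup.coe_eq_univ]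
    at h_null

theorem denseRange_nsmul_of_mFourier_ne_one {a : UnitAddTorus ι}
    (ha : ∀ m : ι → ℤ, m ≠ 0 → mFourier m a ≠ 1) : DenseRange fun q : ℕ ↦ q • a := by
  let H := (AddSubgroup.zmultiples a).topologicalClosure
  have hH : H = ⊤ := addSubgroup_eq_top_of_isClosed_of_mem ha
    (AddSubgroup.isClosed_topologicalClosure _)
    (AddSubgroup.le_topologicalClosure _ (AddSubgroup.mem_zmultiples a))
  rw [← denseRange_zsmul_iff_nsmul, DenseRange, dense_iff_closure_eq]
  exact congr(($hH : Set (UnitAddTorus ι)))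

variable {α : ι → ℝ} (hα : LinearIndependent ℚ fun o : Option ι ↦ o.elim 1 α)
include hα

theorem eq_zero_of_sum_intCast_mul_eq_intCast {m : ι → ℤ} {p : ℤ} (hm : ∑ i, m i * α i = p) :
    m = 0 := by
  have h := Fintype.linearIndependent_iff.1 hα (fun o ↦ o.elim (-p) fun i ↦ m i)
    (by simp [Fintype.sum_option, Rat.smul_def, hm])
  funext i
  simpa using h (some i)

theorem mFourier_coe_ne_one {m : ι → ℤ} (hm : m ≠ 0) :
    mFourier m (fun i ↦ (α i : UnitAddCircle)) ≠ 1 := by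
  rw [mFourier_apply_coe, Ne, Complex.exp_eq_one_iff]
  rintro ⟨p, hp⟩
  rw [mul_comm (p : ℂ), mul_right_inj' Complex.two_pi_I_ne_zero] at hp
  exact hm (eq_zero_of_sum_intCast_mul_eq_intCast hα (p := p) (mod_cast hp))

end Kronecker

theorem exists_nat_forall_fract_mem_Ioo {ι : Type*} [Finite ι] {α : ι → ℝ}
    (hα : LinearIndependent ℚ fun o : Option ι ↦ o.elim 1 α) (β : ι → ℝ) {u v : ι → ℝ}
    (hu : ∀ i, 0 ≤ u i) (huv : ∀ i, u i < v i) (hv : ∀ i, v i ≤ 1) :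
    ∃ q : ℕ, ∀ i, Int.fract (q * α i + β i) ∈ Set.Ioo (u i) (v i) := by
  have := Fintype.ofFinite ι
  let box : Set (UnitAddTorus ι) :=
    Set.univ.pi fun i ↦ (fun x : ℝ ↦ (x : UnitAddCircle)) '' Set.Ioo (u i - β i) (v i - β i)
  have h_open : IsOpen box := isOpen_set_pi Set.finite_univ fun i _ ↦
    QuotientAddGroup.isOpenMap_coe _ isOpen_Ioo
  have h_nonempty : box.Nonempty := Set.univ_pi_nonempty_iff.2 fun i ↦
    (Set.nonempty_Ioo.2 (sub_lt_sub_right (huv i) _)).image _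
  obtain ⟨q, hq⟩ := (denseRange_nsmul_of_mFourier_ne_one fun _ ↦ mFourier_coe_ne_one hα)
    |>.exists_mem_open h_open h_nonempty
  refine ⟨q, fun i ↦ ?_⟩
  obtain ⟨x, ⟨hux, hxv⟩, hx : (x : UnitAddCircle) = q • (α i : UnitAddCircle)⟩ := hq i trivial
  have h_fract : Int.fract (q * α i + β i) = x + β i :=
    calc Int.fract (q * α i + β i)
      _ = Int.fract (x + β i) := by
        rw [← unitAddCircle_coe_eq_coe_iff, AddCircle.coe_add, AddCircle.coe_add, hx,
          ← nsmul_eq_mul, AddCircle.coe_nsmul]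
      _ = x + β i := Int.fract_eq_self.2 ⟨by linarith [hu i], by linarith [hv i]⟩
  exact h_fract ▸ ⟨sub_lt_iff_lt_add.1 hux, lt_sub_iff_add_lt.1 hxv⟩

theorem irrational_of_linearIndependent_one {ι : Type*} {α : ι → ℝ}
    (hα : LinearIndependent ℚ fun o : Option ι ↦ o.elim 1 α) (i : ι) : Irrational (α i) := by
  rintro ⟨r, hr⟩
  have h : Finsupp.single none r = Finsupp.single (some i) 1 :=
    hα (by simp [Rat.smul_def, hr])
  simpa using congr($h (some i))

section Counting

theorem ncard_range_eq_card {X Y Z : Type*} {f : X → Y} {g : X → Z}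
    (h : ∀ x y, f x = f y ↔ g x = g y) (hg : g.Surjective) : (Set.range f).ncard = Nat.card Z :=
  Nat.card_congr <| (Setoid.quotientKerEquivRange f).symm.trans <|
    (Quotient.congrRight h).trans <| Setoid.quotientKerEquivOfSurjective g hg

theorem card_filter_le_eq_iff {X : Type*} [LinearOrder X] {T : Finset X} {x y : X} :
    #{t ∈ T | t ≤ x} = #{t ∈ T | t ≤ y} ↔ ∀ t ∈ T, (t ≤ x ↔ t ≤ y) := by
  refine ⟨fun h ↦ ?_, fun h ↦ by rw [Finset.filter_congr h]⟩
  wlog hxy : x ≤ y generalizing x y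
  · exact fun t ht ↦ (this h.symm (le_of_not_ge hxy) t ht).symm
  have h_subset : T.filter (· ≤ x) ⊆ T.filter (· ≤ y) :=
    Finset.monotone_filter_right _ fun t _ ht ↦ ht.trans hxy
  exact Finset.filter_inj'.1 (Finset.eq_of_subset_of_card_le h_subset h.ge)

theorem exists_Ioo_card_filter_le_eq {X : Type*} [LinearOrder X] (T : Finset X) {l r : X}
    (hlr : l < r) (hT : ∀ t ∈ T, t ∈ Set.Ioo l r) {m : ℕ} (hm : m ≤ #T) :
    ∃ u v, l ≤ u ∧ u < v ∧ v ≤ r ∧ ∀ x ∈ Set.Ioo u v, #{t ∈ T | t ≤ x} = m := by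
  induction T using Finset.induction_on_max generalizing r with
  | empty =>
    obtain rfl : m = 0 := by simpa using hm
    exact ⟨l, r, le_rfl, hlr, le_rfl, fun _ _ ↦ rfl⟩
  | insert t S hS ih =>
    obtain ⟨hlt, htr⟩ := hT t (Finset.mem_insert_self t S)
    have h_card : #(insert t S) = #S + 1 :=
      Finset.card_insert_of_notMem fun ht ↦ (hS t ht).false
    obtain rfl | hmS := (h_card ▸ hm).eq_or_lt
    · refine ⟨t, r, hlt.le, htr, le_rfl, fun x hx ↦ ?_⟩
      rw [Finset.filter_true_of_mem, h_card]
      exact Finset.forall_mem_insert .. |>.2 ⟨hx.1.le, fun y hy ↦ ((hS y hy).trans hx.1).le⟩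
    · obtain ⟨u, v, hlu, huv, hvt, h_count⟩ := ih hlt
        (fun y hy ↦ ⟨(hT y (Finset.mem_insert_of_mem hy)).1, hS y hy⟩) (Nat.lt_succ_iff.1 hmS)
      refine ⟨u, v, hlu, huv, hvt.trans htr.le, fun x hx ↦ ?_⟩
      rw [Finset.filter_insert, if_neg (hx.2.trans_le hvt).not_ge, h_count x hx]

theorem forall_lt_sub_eq_sub_iff {G : Type*} [AddGroup G] {f g : ℕ → G} (h₀ : f 0 = g 0) (n : ℕ) :
    (∀ j < n, f (j + 1) - f j = g (j + 1) - g j) ↔ ∀ j < n, f (j + 1) = g (j + 1) := by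
  refine ⟨fun h j ↦ ?_, fun h j hj ↦ ?_⟩
  · induction j with
    | zero => exact fun hj ↦ by simpa [h₀] using h 0 hj
    | succ j ih => exact fun hj ↦ by simpa [ih (Nat.lt_of_succ_lt hj)] using h (j + 1) hj
  · cases j with
    | zero => rw [h 0 hj, h₀]
    | succ j => rw [h (j + 1) hj, h j (Nat.lt_of_succ_lt hj)]

theorem floor_add_eq_add_ite {R : Type*} [CommRing R] [LinearOrder R] [IsStrictOrderedRing R]
    [FloorRing R] (x y : R) :
    ⌊x + y⌋ = ⌊x⌋ + ⌊y⌋ + if 1 - Int.fract y ≤ Int.fract x then 1 else 0 := by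
  have hx := Int.floor_add_fract x
  have hy := Int.floor_add_fract y
  rw [Int.floor_eq_iff]
  split_ifs with h <;> push_cast <;> constructor <;>
    linarith [Int.fract_nonneg x, Int.fract_nonneg y, Int.fract_lt_one x, Int.fract_lt_one y]

end Counting

section RotationWord

/-- The word of length `n` coding the rotation by `a` from the starting point `x`: its `j`-th letter
is the number of integers in `(x + j * a, x + (j + 1) * a]` (when `0 ≤ a`). The length-`n` factors
of the Sturmian word of slope `a` and intercept `b` are those with `x = q * a + b`. -/
noncomputable def rotationWord (a : ℝ) (n : ℕ) (x : ℝ) : Fin n → ℤ :=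
  fun j ↦ ⌊x + (j + 1) * a⌋ - ⌊x + j * a⌋

/-- The representatives in `(0, 1]` of `-a, -2 * a, …, -n * a` modulo `1`: as `x` runs through
`[0, 1)`, the word `rotationWord a n x` can only change at these points. -/
noncomputable def breakpoints (a : ℝ) (n : ℕ) : Finset ℝ :=
  (Finset.range n).image fun j : ℕ ↦ 1 - Int.fract ((j + 1) * a)

/-- The index, from `0` to `n`, of the interval between consecutive breakpoints in which the class
of `x` modulo `1` lies. -/
noncomputable def breakpointRank (a : ℝ) (n : ℕ) (x : ℝ) : ℕ :=
  #{t ∈ breakpoints a n | t ≤ Int.fract x}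

variable {a : ℝ} {n : ℕ}

theorem rotationWord_eq_iff {x y : ℝ} :
    rotationWord a n x = rotationWord a n y ↔ breakpointRank a n x = breakpointRank a n y := by
  let height (z : ℝ) (j : ℕ) : ℤ := ⌊z + j * a⌋ - ⌊z⌋
  have h_letter (z : ℝ) (j : Fin n) :
      rotationWord a n z j = height z (j + 1) - height z j := by
    simp only [rotationWord, height]
    push_cast
    ring
  have h_height (z : ℝ) (j : ℕ) : height z (j + 1) =
      ⌊(j + 1) * a⌋ + if 1 - Int.fract ((j + 1) * a) ≤ Int.fract z then 1 else 0 := by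
    simp only [height, floor_add_eq_add_ite, Nat.cast_add, Nat.cast_one]
    ring
  have h_height_eq (j : ℕ) : height x (j + 1) = height y (j + 1) ↔
      (1 - Int.fract ((j + 1) * a) ≤ Int.fract x ↔
        1 - Int.fract ((j + 1) * a) ≤ Int.fract y) := by
    rw [h_height, h_height]
    split_ifs with hx hy hy <;> simp [hx, hy]
  calc rotationWord a n x = rotationWord a n y
    _ ↔ ∀ j < n, height x (j + 1) - height x j = height y (j + 1) - height y j := by
      simp only [funext_iff, h_letter, Fin.forall_iff]
    _ ↔ ∀ j < n, height x (j + 1) = height y (j + 1) :=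
      forall_lt_sub_eq_sub_iff (by simp [height]) n
    _ ↔ ∀ t ∈ breakpoints a n, (t ≤ Int.fract x ↔ t ≤ Int.fract y) := by
      simp only [breakpoints, Finset.forall_mem_image, Finset.mem_range, h_height_eq]
    _ ↔ breakpointRank a n x = breakpointRank a n y := card_filter_le_eq_iff.symm

theorem breakpointRank_le (x : ℝ) : breakpointRank a n x ≤ n :=
  calc breakpointRank a n x
    _ ≤ #(breakpoints a n) := Finset.card_filter_le _ _
    _ ≤ #(Finset.range n) := Finset.card_image_le
    _ = n := Finset.card_range n

theorem card_breakpoints (ha : Irrational a) : #(breakpoints a n) = n := by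
  rw [breakpoints, Finset.card_image_of_injective, Finset.card_range]
  intro i j hij
  obtain ⟨p, hp⟩ := Int.fract_eq_fract.1 (sub_right_injective hij)
  by_contra h_ne
  refine (ha.intCast_mul (m := i - j) (by omega)).ne_int p ?_
  push_cast
  linarith

theorem mem_Ioo_of_mem_breakpoints (ha : Irrational a) {t : ℝ} (ht : t ∈ breakpoints a n) :
    t ∈ Set.Ioo 0 1 := by
  obtain ⟨j, -, rfl⟩ := Finset.mem_image.1 ht
  have h_irr : Irrational ((j + 1) * a) := mod_cast ha.natCast_mul j.succ_ne_zero
  have h_pos : 0 < Int.fract ((j + 1) * a) := Int.fract_pos.2 (h_irr.ne_int _)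
  exact ⟨sub_pos.2 (Int.fract_lt_one _), sub_lt_self 1 h_pos⟩

theorem exists_Ioo_breakpointRank_eq (ha : Irrational a) {m : ℕ} (hm : m ≤ n) :
    ∃ u v : ℝ, 0 ≤ u ∧ u < v ∧ v ≤ 1 ∧
      ∀ x, Int.fract x ∈ Set.Ioo u v → breakpointRank a n x = m := by
  obtain ⟨u, v, hu, huv, hv, h⟩ := exists_Ioo_card_filter_le_eq (breakpoints a n) one_pos
    (fun _ ↦ mem_Ioo_of_mem_breakpoints ha) (hm.trans_eq (card_breakpoints ha).symm)
  exact ⟨u, v, hu, huv, hv, fun x ↦ h (Int.fract x)⟩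

theorem exists_nat_forall_breakpointRank_eq {ι : Type*} [Finite ι] {α : ι → ℝ}
    (hα : LinearIndependent ℚ fun o : Option ι ↦ o.elim 1 α) (β : ι → ℝ) {c : ι → ℕ}
    (hc : ∀ i, c i ≤ n) : ∃ q : ℕ, ∀ i, breakpointRank (α i) n (q * α i + β i) = c i := by
  choose u v hu huv hv h_rank using fun i ↦
    exists_Ioo_breakpointRank_eq (irrational_of_linearIndependent_one hα i) (hc i)
  obtain ⟨q, hq⟩ := exists_nat_forall_fract_mem_Ioo hα β hu huv hv
  exact ⟨q, fun i ↦ h_rank i _ (hq i)⟩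

end RotationWord

theorem product_sturmian_complexity_general {ι : Type*} [Finite ι] (α β : ι → ℝ)
    (hindep : LinearIndependent ℚ fun o : Option ι ↦ o.elim 1 α) (s : ℕ → ι → ℤ)
    (hs : ∀ n i, s n i = ⌊((n : ℝ) + 1) * α i + β i⌋ - ⌊(n : ℝ) * α i + β i⌋) (n : ℕ) :
    Set.ncard {w : Fin n → ι → ℤ | ∃ q : ℕ, ∀ j : Fin n, w j = s (q + j)} =
      (n + 1) ^ Nat.card ι := by
  let factor (q : ℕ) (j : Fin n) : ι → ℤ := s (q + j)
  let rank (q : ℕ) (i : ι) : Fin (n + 1) :=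
    ⟨breakpointRank (α i) n (q * α i + β i), Nat.lt_succ_of_le (breakpointRank_le _)⟩
  have h_factor (q : ℕ) (j : Fin n) (i : ι) :
      factor q j i = rotationWord (α i) n (q * α i + β i) j := by
    simp only [factor, hs, rotationWord]
    push_cast
    ring_nf
  have h_factor_rank (p q : ℕ) : factor p = factor q ↔ rank p = rank q := by
    simp only [funext_iff, h_factor, rank, Fin.mk.injEq, ← rotationWord_eq_iff]
    exact forall_comm
  have h_surjective : rank.Surjective := fun c ↦ by
    obtain ⟨q, hq⟩ := exists_nat_forall_breakpointRank_eq hindep β fun i ↦ (c i).is_le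
    exact ⟨q, funext fun i ↦ Fin.ext (hq i)⟩
  calc Set.ncard {w : Fin n → ι → ℤ | ∃ q : ℕ, ∀ j : Fin n, w j = s (q + j)}
    _ = (Set.range factor).ncard :=
      congrArg Set.ncard <| Set.ext fun _ ↦ exists_congr fun _ ↦ funext_iff.symm.trans eq_comm
    _ = Nat.card (ι → Fin (n + 1)) := ncard_range_eq_card h_factor_rank h_surjective
    _ = (n + 1) ^ Nat.card ι := by rw [Nat.card_fun, Nat.card_fin]

/-- If `1, α₁, …, α_k` are linearly independent over `ℚ`, then the product of the
`k` Sturmian words with slopes `αᵢ` and intercepts `βᵢ` has subword complexity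
`(n+1)^k`. -/
theorem product_sturmian_complexity
    (k : ℕ) (hk : 1 ≤ k)
    (α β : Fin k → ℝ)
    (hα : ∀ i, 0 < α i ∧ α i < 1) (hβ : ∀ i, 0 < β i ∧ β i < 1)
    (hindep : LinearIndependent ℚ (Fin.cons 1 α : Fin (k + 1) → ℝ))
    (s : ℕ → Fin k → ℤ)
    (hs : ∀ n i, s n i = ⌊((n : ℝ) + 1) * α i + β i⌋ - ⌊(n : ℝ) * α i + β i⌋) :
    ∀ n : ℕ,
      Set.ncard {w : Fin n → Fin k → ℤ | ∃ q : ℕ, ∀ j : Fin n, w j = s (q + j)}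
        = (n + 1) ^ k := by
  have h_option : LinearIndependent ℚ fun o : Option (Fin k) ↦ o.elim 1 α :=
    (linearIndependent_equiv' (finSuccEquiv k) (funext <| Fin.cases rfl fun _ ↦ rfl)).1 hindep
  simpa using product_sturmian_complexity_general α β h_option s hs
end

section
/- For every integer n ≥ 1, the number of natural numbers m with ⌊m(√2 − 1)⌋ = n equals ⌊(n+1)(√2 + 1)⌋ − ⌊n(√2 + 1)⌋. (Equivalently, OEIS A097509(n) = A276862(n) for all n ≥ 1, a conjecture of Dekking.) -/
/-! Put `β = √2 + 1`, so that `√2 - 1 = β⁻¹`. The condition `⌊m β⁻¹⌋ = n` says that `m` lies in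
`[n β, (n + 1) β)`, and this interval contains `⌈(n + 1) β⌉ - ⌈n β⌉` natural numbers. As `β` is
irrational, each ceiling exceeds the corresponding floor by one when `n ≠ 0`, so the floors have the
same difference. -/

section FloorField

variable {K : Type*} [Field K] [LinearOrder K] [IsStrictOrderedRing K] [FloorRing K] {β : K}

theorem setOf_floor_natCast_mul_inv_eq (hβ : 0 < β) (n : ℕ) :
    {m : ℕ | ⌊(m : K) * β⁻¹⌋ = (n : ℤ)} = Set.Ico ⌈(n : K) * β⌉₊ ⌈((n : K) + 1) * β⌉₊ := by
  ext m
  simp only [Set.mem_ofPred_eq, Set.mem_Ico, Int.floor_eq_iff, Int.cast_natCast, Nat.ceil_le,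
    Nat.lt_ceil, le_mul_inv_iff₀ hβ, mul_inv_lt_iff₀ hβ]

theorem ncard_floor_natCast_mul_inv_eq (hβ : 0 < β) (n : ℕ) :
    ({m : ℕ | ⌊(m : K) * β⁻¹⌋ = (n : ℤ)}.ncard : ℤ) = ⌈((n : K) + 1) * β⌉ - ⌈(n : K) * β⌉ := by
  have hle : (n : K) * β ≤ ((n : K) + 1) * β :=
    mul_le_mul_of_nonneg_right (lt_add_one _).le hβ.le
  rw [setOf_floor_natCast_mul_inv_eq hβ, Set.ncard_Ico_nat, Nat.cast_sub (Nat.ceil_le_ceil hle),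
    Int.natCast_ceil_eq_ceil (by positivity), Int.natCast_ceil_eq_ceil (by positivity)]

end FloorField

theorem ceil_eq_floor_add_one_of_irrational {x : ℝ} (hx : Irrational x) : ⌈x⌉ = ⌊x⌋ + 1 :=
  (Int.ceil_eq_floor_add_one_iff_notMem x).mpr fun ⟨m, hm⟩ ↦ hx.ne_int m hm.symm

theorem irrational_sqrt_two_add_one : Irrational (√2 + 1) := by
  exact_mod_cast irrational_sqrt_two.add_natCast 1

theorem sqrt_two_sub_one_eq_inv : √2 - 1 = (√2 + 1)⁻¹ := by
  refine eq_inv_of_mul_eq_one_left ?_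
  linear_combination Real.sq_sqrt (zero_le_two : (0 : ℝ) ≤ 2)

theorem A097509_eq_A276862_general {β : ℝ} (hβ : Irrational β) (hpos : 0 < β) {n : ℕ}
    (hn : n ≠ 0) :
    ({m : ℕ | ⌊(m : ℝ) * β⁻¹⌋ = (n : ℤ)}.ncard : ℤ) = ⌊((n : ℝ) + 1) * β⌋ - ⌊(n : ℝ) * β⌋ := by
  have hceil (k : ℕ) (hk : k ≠ 0) : ⌈(k : ℝ) * β⌉ = ⌊(k : ℝ) * β⌋ + 1 :=
    ceil_eq_floor_add_one_of_irrational (hβ.natCast_mul hk)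
  have hceil_succ := hceil (n + 1) n.succ_ne_zero
  push_cast at hceil_succ
  rw [ncard_floor_natCast_mul_inv_eq hpos, hceil_succ, hceil n hn, add_sub_add_right_eq_sub]

/-- Dekking's conjecture: for `n ≥ 1`, the number of `m` with `⌊m(√2−1)⌋ = n`
equals `⌊(n+1)(√2+1)⌋ − ⌊n(√2+1)⌋` (i.e., A097509(n) = A276862(n)). -/
theorem A097509_eq_A276862 :
    ∀ n : ℕ, 1 ≤ n →
      (({m : ℕ | ⌊(m : ℝ) * (Real.sqrt 2 - 1)⌋ = (n : ℤ)}.ncard : ℤ))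
        = ⌊((n : ℝ) + 1) * (Real.sqrt 2 + 1)⌋ - ⌊(n : ℝ) * (Real.sqrt 2 + 1)⌋ := by
  intro n hn
  rw [sqrt_two_sub_one_eq_inv]
  exact A097509_eq_A276862_general irrational_sqrt_two_add_one (by positivity)
    (Nat.one_le_iff_ne_zero.mp hn)
end
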